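/- Let R be an equitable ribbon with N boxes. If λ is a partition of N whose number of nonzero parts is at most the number of nonempty rows of R and whose largest part λ₁ is at most the number of nonempty columns of R, then λ ∈ supp(R); that is, there exists an LR filling of R of content λ. -/

import Mathlib

/-- A skew shape `outer / inner`: the boxes of the Young diagram of `outer`
that are not boxes of the Young diagram of `inner`. -/
structure SkewShape where
  outer : YoungDiagram
  inner : YoungDiagram
  inner_le : inner ≤ outer

namespace SkewShape

/-- The set of boxes of a skew shape. -/
def cells (A : SkewShape) : Finset (ℕ × ℕ) := A.outer.cells \ A.inner.cells

/-- The size of a skew shape is its number of boxes. -/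
def size (A : SkewShape) : ℕ := A.cells.card

/-- The length of row `i` of a skew shape. -/
def rowLen (A : SkewShape) (i : ℕ) : ℕ := (A.cells.filter fun c => c.1 = i).card

/-- The length of column `j` of a skew shape. -/
def colLen (A : SkewShape) (j : ℕ) : ℕ := (A.cells.filter fun c => c.2 = j).card

/-- The set of indices of nonempty rows. -/
def rowSet (A : SkewShape) : Finset ℕ := A.cells.image Prod.fst

/-- The set of indices of nonempty columns. -/
def colSet (A : SkewShape) : Finset ℕ := A.cells.image Prod.snd

/-- The number of nonempty rows. -/
def numRows (A : SkewShape) : ℕ := A.rowSet.card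

/-- The number of nonempty columns. -/
def numCols (A : SkewShape) : ℕ := A.colSet.card

/-- `rows A`: the multiset of lengths of the nonempty rows of `A`
(equivalently, that sequence sorted into weakly decreasing order). -/
def rows (A : SkewShape) : Multiset ℕ := A.rowSet.val.map A.rowLen

/-- `cols A`: the multiset of lengths of the nonempty columns of `A`. -/
def cols (A : SkewShape) : Multiset ℕ := A.colSet.val.map A.colLen

/-- A skew shape is disconnected if its boxes can be split into two nonempty
parts such that no box of one part shares a row or a column with a box of the
other part. -/
def Disconnected (A : SkewShape) : Prop :=
  ∃ B C : Finset (ℕ × ℕ), B.Nonempty ∧ C.Nonempty ∧ B ∪ C = A.cells ∧ B ∩ C = ∅ ∧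
    ∀ b ∈ B, ∀ c ∈ C, b.1 ≠ c.1 ∧ b.2 ≠ c.2

/-- A skew shape is connected if it is nonempty and not disconnected. -/
def Connected (A : SkewShape) : Prop := A.cells.Nonempty ∧ ¬ A.Disconnected

/-- A ribbon is a connected skew shape containing no 2×2 block of boxes. -/
def Ribbon (A : SkewShape) : Prop :=
  A.Connected ∧ ∀ i j : ℕ, ¬ ((i, j) ∈ A.cells ∧ (i, j + 1) ∈ A.cells ∧
    (i + 1, j) ∈ A.cells ∧ (i + 1, j + 1) ∈ A.cells)

/-- The lengths of any two nonempty rows differ by at most one. -/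
def RowEquitable (A : SkewShape) : Prop :=
  ∀ i ∈ A.rowSet, ∀ i' ∈ A.rowSet, A.rowLen i ≤ A.rowLen i' + 1

/-- The lengths of any two nonempty columns differ by at most one. -/
def ColEquitable (A : SkewShape) : Prop :=
  ∀ j ∈ A.colSet, ∀ j' ∈ A.colSet, A.colLen j ≤ A.colLen j' + 1

/-- Equitable: both row equitable and column equitable. -/
def Equitable (A : SkewShape) : Prop := A.RowEquitable ∧ A.ColEquitable

/-- A filling of a skew shape is semistandard if its entries are positive
integers, weakly increasing along rows and strictly increasing down columns. -/
def IsSsyt (A : SkewShape) (T : ℕ × ℕ → ℕ) : Prop :=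
  (∀ c ∈ A.cells, 1 ≤ T c) ∧
  (∀ i j j', (i, j) ∈ A.cells → (i, j') ∈ A.cells → j ≤ j' → T (i, j) ≤ T (i, j')) ∧
  (∀ i i' j, (i, j) ∈ A.cells → (i', j) ∈ A.cells → i < i' → T (i, j) < T (i', j))

end SkewShape

/-- `c` comes weakly before `d` in the reverse reading order (right to left
along rows, rows top to bottom). -/
def ReadsBefore (c d : ℕ × ℕ) : Prop := c.1 < d.1 ∨ (c.1 = d.1 ∧ d.2 ≤ c.2)

instance : DecidableRel ReadsBefore := fun c d => by unfold ReadsBefore; infer_instance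

namespace SkewShape

/-- The number of boxes of `A` filled with the entry `k` by the filling `T`. -/
def content (A : SkewShape) (T : ℕ × ℕ → ℕ) (k : ℕ) : ℕ :=
  (A.cells.filter fun c => T c = k).card

/-- A Littlewood--Richardson filling: a semistandard filling such that every
prefix of the reverse reading word contains at least as many `k`'s as
`(k+1)`'s, for every positive `k`. -/
def IsLR (A : SkewShape) (T : ℕ × ℕ → ℕ) : Prop :=
  A.IsSsyt T ∧ ∀ d ∈ A.cells, ∀ k : ℕ,
    (A.cells.filter fun c => T c = k + 2 ∧ ReadsBefore c d).card ≤
    (A.cells.filter fun c => T c = k + 1 ∧ ReadsBefore c d).card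

end SkewShape

/-- The `i`-th largest part (0-indexed) of a multiset of natural numbers,
i.e. the `i`-th entry of the multiset sorted into weakly decreasing order. -/
def part (lam : Multiset ℕ) (i : ℕ) : ℕ := (lam.sort (· ≥ ·)).getD i 0

namespace SkewShape

/-- The support of a skew shape `A`: the set of partitions `lam` (multisets of
positive integers) for which there exists an LR filling of `A` of content `lam`. -/
def supp (A : SkewShape) : Set (Multiset ℕ) :=
  {lam | 0 ∉ lam ∧ ∃ T : ℕ × ℕ → ℕ, A.IsLR T ∧ ∀ i : ℕ, A.content T (i + 1) = part lam i}

/-- The set of LR fillings of `A` of content `lam` (normalized to vanish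
outside the boxes of `A`). -/
def LRset (A : SkewShape) (lam : Multiset ℕ) : Set ((ℕ × ℕ) → ℕ) :=
  {T | A.IsLR T ∧ (∀ c, c ∉ A.cells → T c = 0) ∧ ∀ i : ℕ, A.content T (i + 1) = part lam i}

/-- `s_A − s_B` is Schur-positive: for every partition, the number of LR
fillings of `B` of that content is at most the number for `A`. -/
def SchurPosDiff (A B : SkewShape) : Prop :=
  ∀ lam : Multiset ℕ, (B.LRset lam).ncard ≤ (A.LRset lam).ncard

end SkewShape

/-- The sum of the `k` largest parts of a multiset of natural numbers. -/
def psum (lam : Multiset ℕ) (k : ℕ) : ℕ := ((lam.sort (· ≥ ·)).take k).sum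

/-- Dominance order: `DomLe lam mu` means `lam ⊴ mu`, i.e. for every `k` the
sum of the `k` largest parts of `lam` is at most that of `mu`. -/
def DomLe (lam mu : Multiset ℕ) : Prop := ∀ k : ℕ, psum lam k ≤ psum mu k

/-- The conjugate (transpose) of a partition given as a multiset: its parts
are the numbers `#{x ∈ lam | x ≥ j}` for `j = 1, 2, …`. -/
def conj (lam : Multiset ℕ) : Multiset ℕ :=
  ((Finset.range lam.sum).val.map fun j => Multiset.card (lam.filter fun x => j + 1 ≤ x)).filter
    fun y => y ≠ 0

theorem step_arith (a r l N l0 l1 q al ap : ℕ) (ha : 2 ≤ a) (hr : 2 ≤ r) (hl : 2 ≤ l) (hlr : l ≤ r)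
    (hq : 1 ≤ q) (hq1 : q ≤ l1) (h10 : l1 ≤ l0) (hal : a ≤ al) (hal' : al ≤ a + 1)
    (hap : a ≤ ap) (hap' : ap ≤ a + 1)
    (hN1 : al + ap + a * (r - 2) ≤ N) (hN2 : N ≤ al + ap + (a + 1) * (r - 2))
    (hN3 : l0 + l1 + q * (l - 2) ≤ N) (hN4 : N ≤ l0 + l1 * (l - 1)) (hl2 : l = 2 → l1 = q)
    (hN5 : l0 + r ≤ N + 1) :
    al + l1 + r ≤ N + 2 ∧ ∃ h, 1 ≤ h ∧ h ≤ q ∧ h ≤ al ∧ al + q ≤ l0 + h ∧ h + r + l0 ≤ N + 2 ∧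
      (l = r → h = q) ∧ ((l0 ≥ q + 2 ∨ l1 ≥ q + 1) → ¬ (l = r ∧ q = al) → h < al) ∧
      (l < r → h < q → (l = 2 → q - h + 2 ≤ max l1 (l0 - (al - h))) ∧ (l + 1 = r → q - h ≠ ap)) := by
  obtain ⟨b, rfl⟩ := Nat.exists_eq_add_of_le ha
  obtain ⟨R, rfl⟩ := Nat.exists_eq_add_of_le hr
  obtain ⟨L, rfl⟩ := Nat.exists_eq_add_of_le hl
  have e1 : 2 + R - 2 = R := by omega
  have e2 : 2 + L - 2 = L := by omega
  have e3 : 2 + L - 1 = L + 1 := by omega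
  rw [e1] at hN1 hN2
  rw [e2] at hN3
  rw [e3] at hN4
  have F1 : al + l1 + (2 + R) ≤ N + 2 := by
    have := Nat.zero_le (R * b)
    have : (2 + b) * R = 2 * R + R * b := by ring
    omega
  refine ⟨F1, ?_⟩
  have hal0 : al ≤ l0 := by
    by_contra hc
    have h1 : l1 * (L + 1) ≤ (al - 1) * (R + 1) := Nat.mul_le_mul (by omega) (by omega)
    have h2 : (al - 1) * R ≤ (2 + b) * R := Nat.mul_le_mul_right _ (by omega)
    have : (al - 1) * (R + 1) = (al - 1) * R + (al - 1) := by ring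
    omega
  rcases Nat.lt_or_ge L R with hLR | hLR
  swap
  · have : L = R := by omega
    subst this
    have hqal : q ≤ al := by
      by_contra hc
      have h1 : (al + 1) * L ≤ q * L := Nat.mul_le_mul_right _ (by omega)
      have h2 : (2 + b) * L ≤ al * L := Nat.mul_le_mul_right _ (by omega)
      have : (al + 1) * L = al * L + L := by ring
      have : (2 + b + 1) * L = (2 + b) * L + L := by ring
      omega
    refine ⟨q, by omega, by omega, by omega, by omega, ?_, by omega, by omega, by omega⟩
    obtain ⟨p, rfl⟩ := Nat.exists_eq_add_of_le hq
    have : (1 + p) * L = L + p * L := by ring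
    have := Nat.zero_le (p * L)
    omega
  · -- l < r
    have hLge : L + 1 = R → (q - 1) * R + 2 + R + l0 ≤ N + 2 + (l1 - q) * 0 + 0 + 0 ∨ L + 1 ≠ R := by
      intro h
      left
      subst h
      obtain ⟨p, rfl⟩ := Nat.exists_eq_add_of_le hq
      have : (1 + p) * L = L + p * L := by ring
      have : (1 + p - 1) * (L + 1) = p * L + p := by
        rw [show 1 + p - 1 = p by omega]; ring
      omega
    have hLge' : L + 1 = R → q + R + l0 + 1 ≤ N + 2 := by
      intro h
      have h1 : (q - 1) * 1 ≤ (q - 1) * R := Nat.mul_le_mul_left _ (by omega)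
      have := hLge h
      omega
    by_cases hg : l0 ≥ q + 2 ∨ l1 ≥ q + 1
    · have hgap : L + 1 = R → q + 2 ≤ al + ap := by
        intro h
        by_contra hc
        subst h
        have h1 : (al + ap - 1) * L ≤ q * L := Nat.mul_le_mul_right _ (by omega)
        have h2 : (2 + b + 1) * L ≤ (al + ap - 1) * L := Nat.mul_le_mul_right _ (by omega)
        have : (2 + b + 1) * (L + 1) = (2 + b + 1) * L + (2 + b + 1) := by ring
        omega
      have h2e : L = 0 → l0 < q + al → 3 ≤ al → 2 ≤ q → 2 + (2 + R) + l0 ≤ N + 2 := by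
        intro h
        subst h
        have := Nat.zero_le (R * b)
        have : (2 + b) * R = 2 * R + R * b := by ring
        omega
      clear hLge hN1 hN2 hN3 hN4
      obtain ⟨m, m1, m2, m3, m4, m5, m6⟩ : ∃ m, 1 ≤ m ∧ m ≤ 2 ∧ m ≤ q ∧ m ≤ al - 1 ∧ m + R + l0 ≤ N ∧
          (m = 2 ∨ m = q ∨ m = al - 1 ∨ m + R + l0 = N) :=
        ⟨min (min 2 q) (min (al - 1) (N - l0 - R)), by omega, by omega, by omega, by omega, by omega,
          by omega⟩
      obtain ⟨n, n1, n2, n3, n4, n5, n6⟩ : ∃ n, m ≤ n ∧ n ≤ q ∧ n + 1 ≤ al ∧ n + R + l0 ≤ N ∧ al + q ≤ l0 + n ∧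
          (n = m ∨ n + l0 = al + q) :=
        ⟨max m (al - (l0 - q)), by omega, by omega, by omega, by omega, by omega, by omega⟩
      obtain ⟨h, p1, p2, p3, p4, p5⟩ : ∃ h, n ≤ h ∧ h ≤ q ∧ h + 1 ≤ al ∧ h + R + l0 ≤ N ∧
          (L + 1 = R → q + 1 ≤ ap + h) := by
        by_cases hh : L + 1 = R
        · have := hLge' hh
          have := hgap hh
          exact ⟨max n (q + 1 - ap), by omega, by omega, by omega, by omega, by omega⟩
        · exact ⟨n, by omega, by omega, by omega, by omega, by omega⟩
      refine ⟨h, by omega, by omega, by omega, by omega, by omega, by omega, by omega, ?_⟩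
      intro _ hhq
      refine ⟨?_, by omega⟩
      intro hL
      have hL0 : L = 0 := by omega
      have h2e' := h2e hL0
      have hl1 := hl2 hL
      clear h2e hgap hLge' p5
      omega
    · have hl1 : l1 = q := by omega
      subst hl1
      have hq2 : 2 ≤ l1 := by
        by_contra hc
        have : l1 = 1 := by omega
        subst this
        have := Nat.zero_le (R * b)
        have : (2 + b) * R = 2 * R + R * b := by ring
        omega
      have h2e : 2 + (2 + R) + l0 ≤ N + 2 := by
        have := Nat.zero_le (R * b)
        have : (2 + b) * R = 2 * R + R * b := by ring
        have : l1 * (L + 1) = l1 * L + l1 := by ring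
        have : 2 * L ≤ l1 * L := Nat.mul_le_mul_right _ hq2
        omega
      have hna : L + 1 = R → l1 < al + ap := by
        intro h
        by_contra hc
        subst h
        have h1 : (al + ap) * L ≤ l1 * L := Nat.mul_le_mul_right _ (by omega)
        have h2 : (2 + b + 1) * L ≤ (al + ap) * L := Nat.mul_le_mul_right _ (by omega)
        have : (2 + b + 1) * (L + 1) = (2 + b + 1) * L + (2 + b + 1) := by ring
        omega
      refine ⟨min (min al l1) (N - l0 - R), ?_⟩
      refine ⟨?_, ?_, ?_, ?_, ?_, ?_, ?_, ?_⟩ <;> omega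
/-- Chains of Young diagrams. -/
inductive Reach (s : ℕ → Prop) : ℕ → YoungDiagram → ℕ × ℕ → Prop
  | zero (μ : YoungDiagram) (h : μ.cells = {(0, 0)}) : Reach s 0 μ (0, 0)
  | succ (n : ℕ) (μ μ' : YoungDiagram) (c c' : ℕ × ℕ) (hr : Reach s n μ c) (hc : c' ∉ μ)
      (hm : μ'.cells = insert c' μ.cells) (hD : s n → c.1 < c'.1 ∧ c'.2 ≤ c.2)
      (hA : ¬ s n → c'.1 ≤ c.1 ∧ c.2 < c'.2) : Reach s (n + 1) μ' c'

theorem Reach.transpose {s : ℕ → Prop} {n : ℕ} {μ : YoungDiagram} {c : ℕ × ℕ} (h : Reach s n μ c) :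
    Reach (fun k => ¬ s k) n μ.transpose c.swap := by
  induction h with
  | zero μ h =>
    refine Reach.zero _ ?_
    ext ⟨x, y⟩
    have : ((y, x) ∈ μ.cells) ↔ (y, x) = (0, 0) := by rw [h]; simp
    simp only [YoungDiagram.mem_cells, YoungDiagram.mem_transpose, Prod.swap] at *
    rw [this]; simp [and_comm]
  | succ n μ μ' c c' hr hc hm hD hA ih =>
    refine Reach.succ n _ _ _ _ ih ?_ ?_ ?_ ?_
    · simpa [YoungDiagram.mem_transpose] using hc
    · ext ⟨x, y⟩
      have : ((y, x) ∈ μ'.cells) ↔ (y, x) = c' ∨ (y, x) ∈ μ.cells := by rw [hm]; simp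
      simp only [YoungDiagram.mem_cells, YoungDiagram.mem_transpose, Prod.swap, Finset.mem_insert] at *
      rw [this]
      obtain ⟨u, v⟩ := c'
      simp [and_comm]
    · intro h; have := hA h; exact ⟨this.2, this.1⟩
    · intro h; have := hD (not_not.mp h); exact ⟨this.2, this.1⟩

theorem Reach.congr {s t : ℕ → Prop} {n : ℕ} {μ : YoungDiagram} {c : ℕ × ℕ} (h : Reach s n μ c)
    (hst : ∀ k < n, s k ↔ t k) : Reach t n μ c := by
  induction h with
  | zero μ h => exact Reach.zero _ h
  | succ n μ μ' c c' hr hc hm hD hA ih =>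
    exact Reach.succ n _ _ _ _ (ih fun k hk => hst k (by omega)) hc hm
      (fun h => hD ((hst n (by omega)).2 h)) (fun h => hA (fun h' => h ((hst n (by omega)).1 h')))

theorem Reach.corner {s : ℕ → Prop} {n : ℕ} {μ : YoungDiagram} {c : ℕ × ℕ} (h : Reach s n μ c) :
    μ.rowLen c.1 = c.2 + 1 ∧ μ.rowLen (c.1 + 1) ≤ c.2 := by
  have key : c ∈ μ ∧ (c.1, c.2 + 1) ∉ μ ∧ (c.1 + 1, c.2) ∉ μ := by
    cases h with
    | zero μ h => simp [← YoungDiagram.mem_cells, h]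
    | succ n μ μ' c c' hr hc hm hD hA =>
      simp only [← YoungDiagram.mem_cells, hm]
      simp only [Finset.mem_insert, YoungDiagram.mem_cells]
      refine ⟨by simp, ?_, ?_⟩
      · simp only [Prod.ext_iff]
        rintro (h | h)
        · omega
        · exact hc (μ.up_left_mem le_rfl (by omega) h)
      · simp only [Prod.ext_iff]
        rintro (h | h)
        · omega
        · exact hc (μ.up_left_mem (by omega) le_rfl h)
  obtain ⟨x, y⟩ := c
  simp only [YoungDiagram.mem_iff_lt_rowLen] at key
  simp only
  omega

/-- Cut rows. -/
def cut (μ : YoungDiagram) (g : ℕ → ℕ) (hg : Antitone g) : YoungDiagram where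
  cells := μ.cells.filter fun c => c.2 < g c.1
  isLowerSet := by
    rintro ⟨a, b⟩ ⟨c, d⟩ hle hm
    simp only [Finset.coe_filter, YoungDiagram.mem_cells, Set.mem_ofPred_eq] at hm ⊢
    obtain ⟨h1, h2⟩ := hle
    simp only at h1 h2
    exact ⟨μ.up_left_mem h1 h2 hm.1, by have := hg h1; omega⟩

theorem rowLen_cut (μ : YoungDiagram) (g : ℕ → ℕ) (hg : Antitone g) (hle : ∀ i, g i ≤ μ.rowLen i)
    (i : ℕ) : (cut μ g hg).rowLen i = g i := by
  have : ∀ j, j < (cut μ g hg).rowLen i ↔ j < g i := by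
    intro j
    rw [← YoungDiagram.mem_iff_lt_rowLen, ← YoungDiagram.mem_cells]
    simp only [cut, Finset.mem_filter, YoungDiagram.mem_cells, YoungDiagram.mem_iff_lt_rowLen]
    have := hle i
    omega
  have h1 := this (g i)
  have h2 := this ((cut μ g hg).rowLen i)
  omega

theorem card_yd (μ : YoungDiagram) (B : ℕ) (hB : μ.rowLen B = 0) :
    μ.card = ∑ i ∈ Finset.range B, μ.rowLen i := by
  have : μ.cells = (Finset.range B).biUnion fun i => μ.row i := by
    ext ⟨i, j⟩
    simp only [YoungDiagram.mem_cells, Finset.mem_biUnion, Finset.mem_range, YoungDiagram.mem_row_iff]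
    constructor
    · intro h
      refine ⟨i, ?_, h, rfl⟩
      by_contra hc
      have := μ.rowLen_anti B i (by omega)
      rw [YoungDiagram.mem_iff_lt_rowLen] at h
      omega
    · rintro ⟨_, _, h, _⟩; exact h
  rw [YoungDiagram.card, this, Finset.card_biUnion]
  · exact Finset.sum_congr rfl fun i _ => (μ.rowLen_eq_card).symm
  · intro i _ j _ hij
    rw [Function.onFun, Finset.disjoint_left]
    intro c hc hc'
    rw [YoungDiagram.mem_row_iff] at hc hc'
    exact hij (hc.2.symm.trans hc'.2)

theorem yd_ext {μ ν : YoungDiagram} (h : ∀ i, μ.rowLen i = ν.rowLen i) : μ.cells = ν.cells := by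
  ext ⟨i, j⟩
  simp only [YoungDiagram.mem_cells, YoungDiagram.mem_iff_lt_rowLen, h]

theorem rowLen_colLen (μ : YoungDiagram) : μ.rowLen (μ.colLen 0) = 0 := by
  by_contra h
  have : (μ.colLen 0, 0) ∈ μ := by rw [YoungDiagram.mem_iff_lt_rowLen]; omega
  rw [YoungDiagram.mem_iff_lt_colLen] at this
  omega

theorem rowLen_pos_iff (μ : YoungDiagram) (i : ℕ) : 0 < μ.rowLen i ↔ i < μ.colLen 0 := by
  rw [← YoungDiagram.mem_iff_lt_rowLen, YoungDiagram.mem_iff_lt_colLen]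

theorem strip (s : ℕ → Prop) (n : ℕ) (nu : YoungDiagram) (c' : ℕ × ℕ) (hr : Reach s n nu c')
    (hs : s n) : ∀ (m : ℕ), (∀ k, n < k → k < n + m + 1 → ¬ s k) → ∀ (mu : YoungDiagram),
    (∀ i, nu.rowLen i ≤ mu.rowLen i) → (∀ i, mu.rowLen (i + 1) ≤ nu.rowLen i) →
    mu.card = nu.card + (m + 1) → (∃ l, c'.1 < l ∧ nu.rowLen l < mu.rowLen l) →
    ∃ c, Reach s (n + m + 1) mu c ∧ nu.rowLen c.1 < mu.rowLen c.1 ∧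
      ∀ i < c.1, nu.rowLen i = mu.rowLen i := by
  intro m
  induction m with
  | zero =>
    rintro - mu hle hst hcard ⟨l, hl, hlt⟩
    have hsub : nu.cells ⊆ mu.cells := by
      rintro ⟨i, j⟩ h
      simp only [YoungDiagram.mem_cells, YoungDiagram.mem_iff_lt_rowLen] at h ⊢
      have := hle i; omega
    have hcard' : (mu.cells \ nu.cells).card = 1 := by
      rw [Finset.card_sdiff_of_subset hsub]
      simp only [YoungDiagram.card] at hcard
      omega
    rw [Finset.card_eq_one] at hcard'
    obtain ⟨x, hx⟩ := hcard'
    have hlx : (l, nu.rowLen l) = x := by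
      rw [← Finset.mem_singleton, ← hx]
      simp [YoungDiagram.mem_iff_lt_rowLen, hlt]
    have huniq : ∀ i, nu.rowLen i < mu.rowLen i → i = l := by
      intro i hi
      have : (i, nu.rowLen i) = x := by
        rw [← Finset.mem_singleton, ← hx]
        simp [YoungDiagram.mem_iff_lt_rowLen, hi]
      rw [← hlx] at this
      exact (Prod.mk.inj this).1
    refine ⟨(l, nu.rowLen l), ?_, hlt, ?_⟩
    · refine Reach.succ n nu mu c' _ hr ?_ ?_ ?_ ?_
      · simp [YoungDiagram.mem_iff_lt_rowLen]
      · rw [hlx, ← Finset.singleton_union, ← hx, Finset.sdiff_union_of_subset hsub]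
      · intro _
        refine ⟨hl, ?_⟩
        have h1 := hr.corner.2
        have h2 := nu.rowLen_anti (c'.1 + 1) l hl
        simp only
        omega
      · intro h; exact absurd hs h
    · intro i hi
      simp only at hi
      by_contra hc
      have := huniq i (by have := hle i; omega)
      omega
  | succ m ih =>
    rintro hA mu hle hst hcard ⟨l, hl, hlt⟩
    have hex : ∃ t, nu.rowLen t < mu.rowLen t := ⟨l, hlt⟩
    obtain ⟨t, ht, htmin⟩ : ∃ t, nu.rowLen t < mu.rowLen t ∧ ∀ i < t, nu.rowLen i = mu.rowLen i := by
      classical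
      refine ⟨Nat.find hex, Nat.find_spec hex, fun i hi => ?_⟩
      have := Nat.find_min hex hi
      have := hle i
      omega
    let g : ℕ → ℕ := fun i => if i = t then mu.rowLen i - 1 else mu.rowLen i
    have hg : Antitone g := by
      intro i j hij
      have h1 := mu.rowLen_anti i j hij
      simp only [g]
      split_ifs with h2 h3 h3
      · omega
      · omega
      · subst h3
        have h4 := hst i
        have h5 := mu.rowLen_anti (i + 1) j (by omega)
        omega
      · exact h1
    have hgle : ∀ i, g i ≤ mu.rowLen i := by
      intro i; simp only [g]; split_ifs <;> omega
    have hgr := rowLen_cut mu g hg hgle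
    set mu' := cut mu g hg with hmu'
    have hins : mu.cells = insert (t, mu.rowLen t - 1) mu'.cells := by
      ext ⟨i, j⟩
      simp only [Finset.mem_insert, YoungDiagram.mem_cells, YoungDiagram.mem_iff_lt_rowLen, hgr, g, Prod.mk.injEq]
      split_ifs with h
      · subst h; simp only [true_and]; omega
      · simp [h]
    have hnot : (t, mu.rowLen t - 1) ∉ mu' := by
      simp [YoungDiagram.mem_iff_lt_rowLen, hgr, g]
    have hcard' : mu'.card = nu.card + (m + 1) := by
      have : mu.card = mu'.card + 1 := by
        rw [YoungDiagram.card, hins, Finset.card_insert_of_notMem (by simpa using hnot)]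
      omega
    have hle' : ∀ i, nu.rowLen i ≤ mu'.rowLen i := by
      intro i
      rw [hgr]
      simp only [g]
      split_ifs with h
      · subst h; omega
      · exact hle i
    have hl' : ∃ l, c'.1 < l ∧ nu.rowLen l < mu'.rowLen l := by
      by_contra hc
      push Not at hc
      have htl : t ≤ l := by
        by_contra h
        have := htmin l (by omega); omega
      have hall : ∀ i, nu.rowLen i = mu'.rowLen i := by
        intro i
        by_cases hi : c'.1 < i
        · exact le_antisymm (hle' i) (hc i hi)
        · have h3 := hc l hl
          rw [hgr] at h3 ⊢
          simp only [g] at h3 ⊢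
          by_cases h4 : l = t
          · have := htmin i (by omega)
            rw [if_neg (by omega)]; exact this
          · rw [if_neg h4] at h3; omega
      have := yd_ext hall
      simp only [YoungDiagram.card, this] at hcard'
      omega
    obtain ⟨c, hc, hc1, hc2⟩ := ih (fun k h1 h2 => hA k h1 (by omega)) mu' hle'
      (fun i => by have h1 := hst i; have := hgle (i + 1); rw [hgr]; omega) hcard' hl'
    have htc : t ≤ c.1 := by
      by_contra h
      have h1 := htmin c.1 (by omega)
      have h2 := hgle c.1
      rw [hgr] at hc1
      omega
    refine ⟨(t, mu.rowLen t - 1), ?_, ht, htmin⟩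
    refine Reach.succ _ mu' mu c _ hc hnot hins ?_ ?_
    · intro h; exact absurd h (hA _ (by omega) (by omega))
    · intro _
      refine ⟨htc, ?_⟩
      have h1 := hc.corner.1
      rw [hgr] at h1
      simp only [g] at h1
      simp only
      split_ifs at h1 with h
      · rw [h] at h1; omega
      · have h2 := mu.rowLen_anti (t + 1) c.1 (by omega)
        have h3 := hst t
        omega

theorem exists_cut (mu : YoungDiagram) (al h : ℕ) (hl : 2 ≤ mu.colLen 0) (h1 : 1 ≤ h)
    (hq : h ≤ mu.rowLen (mu.colLen 0 - 1)) (hal : h ≤ al)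
    (hal2 : al + mu.rowLen (mu.colLen 0 - 1) ≤ mu.rowLen 0 + h) :
    ∃ nu : YoungDiagram, (∀ i, nu.rowLen i ≤ mu.rowLen i) ∧ (∀ i, mu.rowLen (i + 1) ≤ nu.rowLen i) ∧
      mu.card = nu.card + al ∧ nu.rowLen 0 = max (mu.rowLen 1) (mu.rowLen 0 - (al - h)) ∧
      nu.rowLen (mu.colLen 0 - 1) = mu.rowLen (mu.colLen 0 - 1) - h ∧
      (∀ x : ℕ, h + x < al → ∃ i < mu.colLen 0 - 1, nu.rowLen i < mu.rowLen i) := by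
  obtain ⟨e, he⟩ : ∃ e, mu.colLen 0 = e + 1 := ⟨mu.colLen 0 - 1, by omega⟩
  have hz := rowLen_colLen mu
  have he' : mu.colLen 0 - 1 = e := by omega
  rw [he'] at hq hal2 ⊢
  rw [he] at hz hl
  set q := mu.rowLen e with hqd
  set t := mu.rowLen 0 - (al - h) with ht
  let g : ℕ → ℕ := fun i => if i < e then max (mu.rowLen (i + 1)) (min (mu.rowLen i) t) else
    if i = e then q - h else 0
  have hgle : ∀ i, g i ≤ mu.rowLen i := by
    intro i
    simp only [g]
    have := mu.rowLen_anti i (i + 1) (by omega)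
    split_ifs with h1 h2
    · omega
    · subst h2; omega
    · omega
  have hgst : ∀ i, mu.rowLen (i + 1) ≤ g i := by
    intro i
    simp only [g]
    have := mu.rowLen_anti (e + 1) (i + 1)
    split_ifs with h1 h2
    · omega
    · subst h2; omega
    · have := this (by omega)
      omega
  have hg : Antitone g := by
    refine antitone_nat_of_succ_le fun i => ?_
    exact (hgle (i + 1)).trans (hgst i)
  have hgr := rowLen_cut mu g hg hgle
  have hge : g e = q - h := by simp [g]
  have hg' : ∀ i < e, g i = max (mu.rowLen (i + 1)) (min (mu.rowLen i) t) := by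
    intro i hi; simp [g, hi]
  have hsum : ∀ k ≤ e, ∑ i ∈ Finset.range k, g i + (mu.rowLen 0 - t) =
      ∑ i ∈ Finset.range k, mu.rowLen i + (mu.rowLen k - t) := by
    intro k
    induction k with
    | zero => simp
    | succ k ih =>
      intro hk
      have := ih (by omega)
      rw [Finset.sum_range_succ, Finset.sum_range_succ, hg' k (by omega)]
      have := mu.rowLen_anti k (k + 1) (by omega)
      omega
  refine ⟨cut mu g hg, ?_, ?_, ?_, ?_, ?_, ?_⟩
  · intro i; rw [hgr]; exact hgle i
  · intro i; rw [hgr]; exact hgst i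
  · rw [card_yd mu (e + 1) hz, card_yd (cut mu g hg) (e + 1) (by rw [hgr]; simp [g])]
    simp only [hgr]
    have := hsum e le_rfl
    rw [Finset.sum_range_succ, Finset.sum_range_succ, hge]
    omega
  · rw [hgr, hg' 0 (by omega)]
    have : mu.rowLen 1 ≤ mu.rowLen 0 := mu.rowLen_anti 0 1 (by omega)
    simp only [zero_add]
    omega
  · rw [hgr, hge]
  · intro x hlt
    by_contra hc
    push Not at hc
    have : ∑ i ∈ Finset.range e, g i = ∑ i ∈ Finset.range e, mu.rowLen i := by
      refine Finset.sum_congr rfl fun i hi => ?_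
      have := hc i (Finset.mem_range.1 hi)
      rw [hgr] at this
      exact le_antisymm (hgle i) this
    have := hsum e le_rfl
    omega

/-- Nonexceptional diagrams. -/
def good (mu : YoungDiagram) (r ap : ℕ) : Prop :=
  (mu.rowLen (mu.colLen 0 - 1) + 2 ≤ mu.rowLen 0 ∨ mu.rowLen (mu.colLen 0 - 1) + 1 ≤ mu.rowLen 1) ∧
    ¬ (mu.colLen 0 = r ∧ mu.rowLen (mu.colLen 0 - 1) = ap)

theorem core_step (s : ℕ → Prop) (M al r ap h : ℕ) (mu : YoungDiagram) (hM : 1 ≤ M)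
    (ih : ∀ nu : YoungDiagram, nu.card = M → nu.colLen 0 ≤ r → nu.rowLen 0 + r ≤ M + 1 →
      ∃ c, Reach s (M - 1) nu c ∧ (good nu r ap → c.1 + 1 < nu.colLen 0))
    (hs : s (M - 1)) (hA : ∀ k, M ≤ k → k + 1 < M + al → ¬ s k)
    (hcard : mu.card = M + al) (hl : 2 ≤ mu.colLen 0) (hlr : mu.colLen 0 ≤ r + 1)
    (h1 : 1 ≤ h) (hq : h ≤ mu.rowLen (mu.colLen 0 - 1)) (hal : h ≤ al)
    (hal2 : al + mu.rowLen (mu.colLen 0 - 1) ≤ mu.rowLen 0 + h)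
    (hb1 : mu.rowLen 1 + r ≤ M + 1) (hb2 : h + r + mu.rowLen 0 ≤ M + al + 1)
    (hlast : mu.colLen 0 = r + 1 → h = mu.rowLen (mu.colLen 0 - 1))
    (hgood : mu.colLen 0 < r + 1 → h < mu.rowLen (mu.colLen 0 - 1) →
      (mu.colLen 0 = 2 → mu.rowLen (mu.colLen 0 - 1) - h + 2 ≤ max (mu.rowLen 1) (mu.rowLen 0 - (al - h))) ∧
      (mu.colLen 0 = r → mu.rowLen (mu.colLen 0 - 1) - h ≠ ap)) :
    ∃ c, Reach s (M + al - 1) mu c ∧ (h < al → c.1 + 1 < mu.colLen 0) := by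
  obtain ⟨nu, hle, hst, hc, hn0, hne, hex⟩ := exists_cut mu al h hl h1 hq hal hal2
  set e := mu.colLen 0 - 1 with he
  have hz := rowLen_colLen mu
  -- number of rows of nu
  have hcl : nu.colLen 0 ≤ mu.colLen 0 := by
    by_contra hcon
    have := (rowLen_pos_iff nu (mu.colLen 0)).2 (by omega)
    have := hle (mu.colLen 0)
    omega
  have hclq : h = mu.rowLen e → nu.colLen 0 ≤ e := by
    intro hh
    by_contra hcon
    have := (rowLen_pos_iff nu e).2 (by omega)
    omega
  have hclq' : h < mu.rowLen e → nu.colLen 0 = e + 1 := by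
    intro hh
    have := (rowLen_pos_iff nu e).1 (by omega)
    omega
  obtain ⟨c', hr, hg⟩ := ih nu (by omega) (by omega) (by rw [hn0]; omega)
  have hc'l : c'.1 < nu.colLen 0 := by
    rw [← rowLen_pos_iff, hr.corner.1]; omega
  have hjun : c'.1 < e := by
    by_cases hh : h = mu.rowLen e
    · have := hclq hh; omega
    · have hlt : h < mu.rowLen e := by omega
      have hcn := hclq' hlt
      have hl' : mu.colLen 0 < r + 1 := by
        by_contra hcon
        exact hh (hlast (by omega))
      obtain ⟨g1, g2⟩ := hgood hl' hlt
      have hgd : good nu r ap := by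
        refine ⟨?_, ?_⟩
        · rw [hcn, Nat.add_sub_cancel, hne, hn0]
          by_cases hl2 : mu.colLen 0 = 2
          · left; exact g1 hl2
          · right
            have h3 := hst 1
            have h4 := mu.rowLen_anti 2 e (by omega)
            simp only [Nat.reduceAdd] at h3
            omega
        · rw [hcn, Nat.add_sub_cancel, hne]
          rintro ⟨u, v⟩
          exact g2 (by omega) v
      have := hg hgd
      omega
  obtain ⟨c, hc1, hc2, hc3⟩ := strip s (M - 1) nu c' hr hs (al - 1)
    (fun k k1 k2 => hA k (by omega) (by omega)) mu hle hst (by omega) ⟨e, hjun, by omega⟩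
  refine ⟨c, ?_, ?_⟩
  · rwa [show M - 1 + (al - 1) + 1 = M + al - 1 by omega] at hc1
  · intro hlt
    obtain ⟨i, hi, hi2⟩ := hex 0 hlt
    by_contra hcon
    have := hc3 i (by omega)
    omega

theorem card_bounds (mu : YoungDiagram) (hl : 2 ≤ mu.colLen 0) :
    mu.rowLen 0 + mu.rowLen 1 + mu.rowLen (mu.colLen 0 - 1) * (mu.colLen 0 - 2) ≤ mu.card ∧
    mu.card ≤ mu.rowLen 0 + mu.rowLen 1 * (mu.colLen 0 - 1) := by
  have hz := rowLen_colLen mu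
  rw [card_yd mu _ hz]
  obtain ⟨l, hl⟩ := Nat.exists_eq_add_of_le' hl
  rw [hl, Finset.sum_range_succ', Finset.sum_range_succ']
  have e1 : l + 2 - 1 = l + 1 := by omega
  have e2 : l + 2 - 2 = l := by omega
  rw [e1, e2]
  have h1 : ∑ _i ∈ Finset.range l, mu.rowLen (l + 1) ≤ ∑ i ∈ Finset.range l, mu.rowLen (i + 1 + 1) :=
    Finset.sum_le_sum fun i hi => mu.rowLen_anti _ _ (by have := Finset.mem_range.1 hi; omega)
  have h2 : ∑ i ∈ Finset.range l, mu.rowLen (i + 1 + 1) ≤ ∑ _i ∈ Finset.range l, mu.rowLen 1 :=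
    Finset.sum_le_sum fun i hi => mu.rowLen_anti _ _ (by omega)
  simp only [Finset.sum_const, Finset.card_range, smul_eq_mul] at h1 h2
  have : mu.rowLen 1 * (l + 1) = l * mu.rowLen 1 + mu.rowLen 1 := by ring
  have : mu.rowLen (l + 1) * l = l * mu.rowLen (l + 1) := by ring
  simp only [zero_add]
  omega

theorem card_one_row (mu : YoungDiagram) (hl : mu.colLen 0 ≤ 1) : mu.card = mu.rowLen 0 := by
  have hz : mu.rowLen 1 = 0 := by
    by_contra h
    have := (rowLen_pos_iff mu 1).1 (by omega)
    omega
  rw [card_yd mu 1 hz]; simp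

theorem single_row (s : ℕ → Prop) : ∀ (m : ℕ), (∀ k < m, ¬ s k) → ∀ (mu : YoungDiagram),
    mu.colLen 0 ≤ 1 → mu.card = m + 1 → ∃ c, Reach s m mu c := by
  have hrow : ∀ mu : YoungDiagram, mu.colLen 0 ≤ 1 → ∀ i, 1 ≤ i → mu.rowLen i = 0 := by
    intro mu hl i hi
    by_contra h
    have := (rowLen_pos_iff mu i).1 (by omega)
    omega
  intro m
  induction m with
  | zero =>
    intro _ mu hl hc
    refine ⟨(0, 0), Reach.zero _ ?_⟩
    have h1 := card_one_row mu hl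
    ext ⟨i, j⟩
    simp only [YoungDiagram.mem_cells, YoungDiagram.mem_iff_lt_rowLen, Finset.mem_singleton,
      Prod.mk.injEq]
    by_cases hi : i = 0
    · subst hi; omega
    · have := hrow mu hl i (by omega)
      omega
  | succ m ih =>
    intro hs mu hl hc
    have h1 := card_one_row mu hl
    let g : ℕ → ℕ := fun i => if i = 0 then m + 1 else 0
    have hg : Antitone g := by
      intro i j hij
      simp only [g]
      split_ifs <;> omega
    have hgle : ∀ i, g i ≤ mu.rowLen i := by
      intro i
      simp only [g]
      split_ifs with h
      · subst h; omega
      · omega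
    have hgr := rowLen_cut mu g hg hgle
    have hl' : (cut mu g hg).colLen 0 ≤ 1 := by
      by_contra hcon
      have := (rowLen_pos_iff (cut mu g hg) 1).2 (by omega)
      rw [hgr] at this
      simp [g] at this
    have hc' : (cut mu g hg).card = m + 1 := by
      rw [card_one_row _ hl', hgr]; simp [g]
    obtain ⟨c, hcr⟩ := ih (fun k hk => hs k (by omega)) _ hl' hc'
    have hc1 : c.1 = 0 := by
      have := hcr.corner.1
      rw [hgr] at this
      simp only [g] at this
      split_ifs at this with h
      exact h
    have hc2 := hcr.corner.1
    rw [hc1, hgr] at hc2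
    simp only [g, if_true] at hc2
    refine ⟨(0, m + 1), Reach.succ m _ mu c _ hcr ?_ ?_ ?_ ?_⟩
    · simp [YoungDiagram.mem_iff_lt_rowLen, hgr, g]
    · ext ⟨i, j⟩
      simp only [YoungDiagram.mem_cells, YoungDiagram.mem_iff_lt_rowLen, Finset.mem_insert,
        Prod.mk.injEq, hgr, g]
      by_cases hi : i = 0
      · subst hi; rw [if_pos rfl]; omega
      · have := hrow mu hl i (by omega)
        simp only [if_neg hi]
        omega
    · intro h; exact absurd h (hs m (by omega))
    · intro _; simp only; omega

theorem main_rows (s : ℕ → Prop) (a : ℕ) (ha : 2 ≤ a) (al S : ℕ → ℕ) (hS0 : S 0 = 0)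
    (hS : ∀ i, S (i + 1) = S i + al i) : ∀ r, (∀ i ≤ r, a ≤ al i ∧ al i ≤ a + 1) →
    (∀ i, 1 ≤ i → i ≤ r → s (S i - 1)) →
    (∀ i ≤ r, ∀ k, S i ≤ k → k + 1 < S (i + 1) → ¬ s k) → ∀ mu : YoungDiagram,
    mu.card = S (r + 1) → mu.colLen 0 ≤ r + 1 → mu.rowLen 0 + (r + 1) ≤ S (r + 1) + 1 →
    ∃ c, Reach s (S (r + 1) - 1) mu c ∧ (good mu (r + 1) (al r) → c.1 + 1 < mu.colLen 0) := by
  have hSb : ∀ r, (∀ i < r, a ≤ al i ∧ al i ≤ a + 1) → a * r ≤ S r ∧ S r ≤ (a + 1) * r := by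
    intro r
    induction r with
    | zero => intro _; simp [hS0]
    | succ r ih =>
      intro h
      have h1 := ih fun i hi => h i (by omega)
      have h2 := h r (by omega)
      rw [hS r]
      have : a * (r + 1) = a * r + a := by ring
      have : (a + 1) * (r + 1) = (a + 1) * r + (a + 1) := by ring
      omega
  intro r
  induction r with
  | zero =>
    intro hal hD hA mu hc hl h0
    have h1 := hS 0
    have h2 := hal 0 le_rfl
    obtain ⟨c, hcr⟩ := single_row s (S (0 + 1) - 1)
      (fun k hk => hA 0 le_rfl k (by omega) (by omega)) mu (by omega) (by omega)
    refine ⟨c, hcr, ?_⟩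
    rintro ⟨hg, -⟩
    have h3 := mu.rowLen_anti 0 1 (by omega)
    rw [show mu.colLen 0 - 1 = 0 by omega] at hg
    omega
  | succ r ih =>
    intro hal hD hA mu hc hl h0
    have hb := hSb r fun i hi => hal i (by omega)
    have h1 := hS r
    have h2 := hS (r + 1)
    have ha1 := hal r (by omega)
    have ha2 := hal (r + 1) le_rfl
    have hl2 : 2 ≤ mu.colLen 0 := by
      by_contra hcon
      have := card_one_row mu (by omega)
      omega
    have hcb := card_bounds mu hl2
    have hqpos := (rowLen_pos_iff mu (mu.colLen 0 - 1)).2 (by omega)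
    have hq1 := mu.rowLen_anti 1 (mu.colLen 0 - 1) (by omega)
    have h10 := mu.rowLen_anti 0 1 (by omega)
    obtain ⟨hb1, h, p1, p2, p3, p4, p5, p6, p7, p8⟩ := step_arith a (r + 2) (mu.colLen 0) mu.card (mu.rowLen 0)
      (mu.rowLen 1) (mu.rowLen (mu.colLen 0 - 1)) (al (r + 1)) (al r) ha (by omega) hl2 (by omega)
      hqpos hq1 h10 (by omega) (by omega) (by omega) (by omega)
      (by rw [Nat.add_sub_cancel]; omega) (by rw [Nat.add_sub_cancel]; omega) hcb.1 hcb.2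
      (by intro h; rw [h]) (by omega)
    have ih' := ih (fun i hi => hal i (by omega)) (fun i h1 h2 => hD i h1 (by omega))
      (fun i hi => hA i (by omega))
    rw [h2]
    obtain ⟨c, hc1, hc2⟩ := core_step s (S (r + 1)) (al (r + 1)) (r + 1) (al r) h mu (by omega) ih'
      (hD (r + 1) (by omega) le_rfl) (fun k k1 k2 => hA (r + 1) le_rfl k k1 (by omega))
      (by omega) hl2 (by omega) p1 p2 p3 p4 (by omega) (by omega) (fun h => p6 (by omega))
      (fun h1 h2 => ⟨(p8 (by omega) h2).1, fun h3 => (p8 (by omega) h2).2 (by omega)⟩)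
    refine ⟨c, hc1, ?_⟩
    rintro ⟨g1, g2⟩
    exact hc2 (p7 g1 g2)

theorem alt_rows (s : ℕ → Prop) (r : ℕ) (hr : 1 ≤ r) (hD : ∀ i < r, s (2 * i + 1))
    (hA : ∀ i < r, ¬ s (2 * i)) (mu : YoungDiagram) (hcard : mu.card = 2 * r + 1)
    (hl : mu.colLen 0 ≤ r + 1) (h0 : mu.rowLen 0 ≤ r + 1) : ∃ c, Reach s (2 * r) mu c := by
  obtain ⟨r', rfl⟩ := Nat.exists_eq_add_of_le' hr
  have ih := main_rows s 2 le_rfl (fun _ => 2) (fun i => 2 * i) rfl (fun i => by ring) r'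
    (fun _ _ => by simp)
    (fun i h1 h2 => by
      have := hD (i - 1) (by omega)
      rwa [show 2 * (i - 1) + 1 = 2 * i - 1 by omega] at this)
    (fun i hi k h1 h2 => by
      have := hA i (by omega)
      rwa [show k = 2 * i by omega])
  have hl2 : 2 ≤ mu.colLen 0 := by
    by_contra hcon
    have := card_one_row mu (by omega)
    omega
  have hcb := card_bounds mu hl2
  have hqpos := (rowLen_pos_iff mu (mu.colLen 0 - 1)).2 (by omega)
  have hq1 := mu.rowLen_anti 1 (mu.colLen 0 - 1) (by omega)
  have h10 := mu.rowLen_anti 0 1 (by omega)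
  have hqm : mu.rowLen (mu.colLen 0 - 1) * mu.colLen 0 ≤ 2 * (r' + 1) + 1 := by
    obtain ⟨l, hl⟩ := Nat.exists_eq_add_of_le' hl2
    have e1 : mu.rowLen (mu.colLen 0 - 1) * mu.colLen 0 = mu.rowLen (mu.colLen 0 - 1) * (mu.colLen 0 - 2) +
      2 * mu.rowLen (mu.colLen 0 - 1) := by
      rw [show mu.colLen 0 - 2 = l by omega, hl]; ring
    omega
  obtain ⟨c, hc1, -⟩ := core_step s (2 * (r' + 1)) 1 (r' + 1) 2 1 mu (by omega) ih
    (by have := hD r' (by omega); rwa [show 2 * (r' + 1) - 1 = 2 * r' + 1 by omega])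
    (fun k k1 k2 => by omega) hcard hl2 hl le_rfl hqpos le_rfl (by omega) (by omega) (by omega)
    (fun h => by
      by_contra hcon
      have : 2 * (mu.colLen 0) ≤ mu.rowLen (mu.colLen 0 - 1) * mu.colLen 0 :=
        Nat.mul_le_mul_right _ (by omega)
      omega)
    (fun h1 h2 => ⟨fun h => by
        have h3 := hcb.2
        rw [h] at h3 ⊢
        simp only [Nat.add_one_sub_one] at h3 ⊢
        omega, fun h hcon => by
        have : 3 * (mu.colLen 0) ≤ mu.rowLen (mu.colLen 0 - 1) * mu.colLen 0 :=
          Nat.mul_le_mul_right _ (by omega)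
        omega⟩)
  exact ⟨c, by simpa using hc1⟩

/-- Number of indices below `N` at height `i`. -/
def cnt (N : ℕ) (f : ℕ → ℕ) (i : ℕ) : ℕ := ((Finset.range N).filter fun k => f k = i).card

/-- `f` and `g` count the steps in `s` and outside `s`. -/
structure Walk2 (N : ℕ) (s : ℕ → Prop) (f g : ℕ → ℕ) : Prop where
  f0 : f 0 = 0
  g0 : g 0 = 0
  hs : ∀ k, k + 1 < N → s k → f (k + 1) = f k + 1 ∧ g (k + 1) = g k
  hn : ∀ k, k + 1 < N → ¬ s k → f (k + 1) = f k ∧ g (k + 1) = g k + 1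

theorem Walk2.swap {N : ℕ} {s : ℕ → Prop} {f g : ℕ → ℕ} (h : Walk2 N s f g) :
    Walk2 N (fun k => ¬ s k) g f :=
  ⟨h.g0, h.f0, fun k hk hs => ⟨(h.hn k hk hs).2, (h.hn k hk hs).1⟩,
    fun k hk hs => ⟨(h.hs k hk (not_not.1 hs)).2, (h.hs k hk (not_not.1 hs)).1⟩⟩

theorem Walk2.sum {N : ℕ} {s : ℕ → Prop} {f g : ℕ → ℕ} (h : Walk2 N s f g) :
    ∀ k < N, f k + g k = k := by
  intro k
  induction k with
  | zero => intro _; simp [h.f0, h.g0]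
  | succ k ih =>
    intro hk
    have := ih (by omega)
    by_cases hs : s k
    · have := h.hs k hk hs; omega
    · have := h.hn k hk hs; omega

theorem Walk2.step {N : ℕ} {s : ℕ → Prop} {f g : ℕ → ℕ} (h : Walk2 N s f g) (k : ℕ) (hk : k + 1 < N) :
    f k ≤ f (k + 1) ∧ f (k + 1) ≤ f k + 1 := by
  by_cases hs : s k
  · have := h.hs k hk hs; omega
  · have := h.hn k hk hs; omega

theorem Walk2.mono {N : ℕ} {s : ℕ → Prop} {f g : ℕ → ℕ} (h : Walk2 N s f g) (k d : ℕ)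
    (hk : k + d < N) : f k ≤ f (k + d) := by
  induction d with
  | zero => simp
  | succ d ih =>
    have := ih (by omega)
    have := (h.step (k + d) (by omega)).1
    rw [← add_assoc]
    omega

theorem lower_card (N : ℕ) (p : ℕ → Prop) [DecidablePred p]
    (hp : ∀ j k, j ≤ k → k < N → p k → p j) (k : ℕ) (hk : k < N) :
    k < ((Finset.range N).filter p).card ↔ p k := by
  constructor
  · intro h
    by_contra hc
    have : (Finset.range N).filter p ⊆ Finset.range k := by
      intro j hj
      simp only [Finset.mem_filter, Finset.mem_range] at hj ⊢
      by_contra hjk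
      exact hc (hp k j (by omega) hj.1 hj.2)
    have := Finset.card_le_card this
    simp at this
    omega
  · intro h
    have : Finset.range (k + 1) ⊆ (Finset.range N).filter p := by
      intro j hj
      simp only [Finset.mem_filter, Finset.mem_range] at hj ⊢
      exact ⟨by omega, hp j k (by omega) hk h⟩
    have := Finset.card_le_card this
    simp at this
    omega

theorem comb_rows (N : ℕ) (hN : 1 ≤ N) (s : ℕ → Prop) (f g : ℕ → ℕ) (hw : Walk2 N s f g)
    (heq : ∀ i ≤ f (N - 1), ∀ j ≤ f (N - 1), cnt N f i ≤ cnt N f j + 1)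
    (h2 : ∀ i ≤ f (N - 1), 2 ≤ cnt N f i) (mu : YoungDiagram) (hcard : mu.card = N)
    (hl : mu.colLen 0 ≤ f (N - 1) + 1) (h0 : mu.rowLen 0 ≤ g (N - 1) + 1) :
    ∃ c, Reach s (N - 1) mu c := by
  obtain ⟨i0, hi0, hmin⟩ := Finset.exists_min_image (Finset.range (f (N - 1) + 1)) (cnt N f)
    ⟨0, by simp⟩
  simp only [Finset.mem_range] at hi0 hmin
  let S : ℕ → ℕ := fun i => ((Finset.range N).filter fun k => f k < i).card
  have hSk : ∀ i k, k < N → (k < S i ↔ f k < i) := by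
    intro i k hk
    refine lower_card N (fun k => f k < i) ?_ k hk
    intro j k hjk hk h
    have := hw.mono j (k - j) (by omega)
    rw [show j + (k - j) = k by omega] at this
    omega
  have hS : ∀ i, S (i + 1) = S i + cnt N f i := by
    intro i
    simp only [S, cnt]
    rw [← Finset.card_union_of_disjoint]
    · congr 1
      ext k
      simp only [Finset.mem_filter, Finset.mem_range, Finset.mem_union]
      omega
    · rw [Finset.disjoint_left]
      intro k
      simp only [Finset.mem_filter, Finset.mem_range]
      omega
  have hSle : ∀ i, S i ≤ N := by
    intro i
    exact (Finset.card_filter_le _ _).trans (by simp)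
  have hSN : S (f (N - 1) + 1) = N := by
    have := (hSk (f (N - 1) + 1) (N - 1) (by omega)).2 (by omega)
    have := hSle (f (N - 1) + 1)
    omega
  have hsum := hw.sum (N - 1) (by omega)
  obtain ⟨c, hc, -⟩ := main_rows s (cnt N f i0) (h2 i0 (by omega)) (cnt N f) S (by simp [S]) hS (f (N - 1))
    (fun i hi => ⟨hmin i (by omega), heq i hi i0 (by omega)⟩)
    (fun i h1 hi => by
      have hlt : S i < N := by
        by_contra hcon
        have := (hSk i (N - 1) (by omega)).1 (by omega)
        omega
      have h3 := hS (i - 1)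
      have h4 := h2 (i - 1) (by omega)
      rw [show i - 1 + 1 = i by omega] at h3
      by_contra hns
      have h5 := (hw.hn (S i - 1) (by omega) hns).1
      rw [show S i - 1 + 1 = S i by omega] at h5
      have h6 := hSk i (S i - 1) (by omega)
      have h7 := hSk i (S i) (by omega)
      omega)
    (fun i hi k h1 h2 hsk => by
      have h3 := hSle (i + 1)
      have h5 := (hw.hs k (by omega) hsk).1
      have h6 := hSk i k (by omega)
      have h7 := hSk (i + 1) (k + 1) (by omega)
      omega)
    mu (by omega) hl (by omega)
  rw [hSN] at hc
  exact ⟨c, hc⟩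

theorem no_three {N : ℕ} {s : ℕ → Prop} {f g : ℕ → ℕ} (hw : Walk2 N s f g)
    (hle : ∀ i ≤ f (N - 1), cnt N f i ≤ 2) (k : ℕ) (hk : k + 2 < N) (h1 : ¬ s k) : s (k + 1) := by
  by_contra h2
  have e1 := (hw.hn k (by omega) h1).1
  have e2 := (hw.hn (k + 1) (by omega) h2).1
  have h3 := hw.mono k (N - 1 - k) (by omega)
  rw [show k + (N - 1 - k) = N - 1 by omega] at h3
  have h4 := hle (f k) h3
  have : ({k, k + 1, k + 2} : Finset ℕ) ⊆ (Finset.range N).filter fun j => f j = f k := by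
    intro j hj
    simp only [Finset.mem_insert, Finset.mem_singleton] at hj
    simp only [Finset.mem_filter, Finset.mem_range]
    rcases hj with rfl | rfl | rfl
    · exact ⟨by omega, rfl⟩
    · exact ⟨by omega, e1⟩
    · exact ⟨by omega, by rw [e2, e1]⟩
  have := Finset.card_le_card this
  rw [Finset.card_eq_three.2 ⟨k, k + 1, k + 2, by omega, by omega, by omega, rfl⟩] at this
  unfold cnt at h4
  omega

theorem comb_alt (N : ℕ) (hN : 2 ≤ N) (s : ℕ → Prop) (f g : ℕ → ℕ) (hw : Walk2 N s f g)
    (hf : ∀ i ≤ f (N - 1), cnt N f i ≤ 2) (hg : ∀ i ≤ g (N - 1), cnt N g i ≤ 2) (h00 : ¬ s 0)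
    (mu : YoungDiagram) (hcard : mu.card = N)
    (hl : mu.colLen 0 ≤ f (N - 1) + 1) (h0 : mu.rowLen 0 ≤ g (N - 1) + 1) :
    ∃ c, Reach s (N - 1) mu c := by
  have halt : ∀ i, (2 * i + 1 < N → ¬ s (2 * i)) ∧ (2 * i + 2 < N → s (2 * i + 1)) := by
    intro i
    induction i with
    | zero => exact ⟨fun _ => h00, fun h => no_three hw hf 0 (by omega) h00⟩
    | succ i ih =>
      have h1 : 2 * (i + 1) + 1 < N → ¬ s (2 * (i + 1)) := by
        intro h
        have := no_three hw.swap hg (2 * i + 1) (by omega) (not_not.2 (ih.2 (by omega)))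
        exact this
      exact ⟨h1, fun h => no_three hw hf (2 * (i + 1)) (by omega) (h1 (by omega))⟩
  have hfk : ∀ k < N, f k = k / 2 := by
    intro k
    induction k with
    | zero => intro _; simp [hw.f0]
    | succ k ih =>
      intro hk
      have h1 := ih (by omega)
      rcases Nat.even_or_odd' k with ⟨i, rfl | rfl⟩
      · have := hw.hn _ hk ((halt i).1 (by omega))
        omega
      · have := hw.hs _ hk ((halt i).2 (by omega))
        omega
  have hfN := hfk (N - 1) (by omega)
  have hsum := hw.sum (N - 1) (by omega)
  rcases Nat.even_or_odd' N with ⟨r, rfl | rfl⟩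
  · obtain ⟨c, hc, -⟩ := main_rows s 2 le_rfl (fun _ => 2) (fun i => 2 * i) rfl (fun i => by ring) (r - 1)
      (fun _ _ => by simp)
      (fun i h1 h2 => by
        have := (halt (i - 1)).2 (by omega)
        rwa [show 2 * (i - 1) + 1 = 2 * i - 1 by omega] at this)
      (fun i hi k h1 h2 => by
        have := (halt i).1 (by omega)
        rwa [show k = 2 * i by omega]) mu (by omega) (by omega) (by omega)
    rw [show r - 1 + 1 = r by omega] at hc
    exact ⟨c, hc⟩
  · exact alt_rows s r (by omega) (fun i hi => (halt i).2 (by omega)) (fun i hi => (halt i).1 (by omega)) mu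
      hcard (by omega) (by omega)

theorem comb (N : ℕ) (hN : 1 ≤ N) (s : ℕ → Prop) (f g : ℕ → ℕ) (hw : Walk2 N s f g)
    (hf : ∀ i ≤ f (N - 1), ∀ j ≤ f (N - 1), cnt N f i ≤ cnt N f j + 1)
    (hg : ∀ i ≤ g (N - 1), ∀ j ≤ g (N - 1), cnt N g i ≤ cnt N g j + 1)
    (mu : YoungDiagram) (hcard : mu.card = N)
    (hl : mu.colLen 0 ≤ f (N - 1) + 1) (h0 : mu.rowLen 0 ≤ g (N - 1) + 1) :
    ∃ c, Reach s (N - 1) mu c := by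
  have hT : (∃ c, Reach (fun k => ¬ s k) (N - 1) mu.transpose c) → ∃ c, Reach s (N - 1) mu c := by
    rintro ⟨c, hc⟩
    refine ⟨c.swap, ?_⟩
    have := hc.transpose
    rw [YoungDiagram.transpose_transpose] at this
    exact this.congr fun k _ => not_not
  have hcT : mu.transpose.card = N := by
    rw [← hcard]; simp [YoungDiagram.card, YoungDiagram.transpose]
  have hlT : mu.transpose.colLen 0 ≤ g (N - 1) + 1 := by rw [YoungDiagram.colLen_transpose]; exact h0
  have h0T : mu.transpose.rowLen 0 ≤ f (N - 1) + 1 := by rw [YoungDiagram.rowLen_transpose]; exact hl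
  by_cases h1 : ∀ i ≤ f (N - 1), 2 ≤ cnt N f i
  · exact comb_rows N hN s f g hw hf h1 mu hcard hl h0
  by_cases h2 : ∀ i ≤ g (N - 1), 2 ≤ cnt N g i
  · exact hT (comb_rows N hN _ g f hw.swap hg h2 mu.transpose hcT hlT h0T)
  push Not at h1 h2
  obtain ⟨i, hi, hi2⟩ := h1
  obtain ⟨j, hj, hj2⟩ := h2
  have hf' : ∀ i ≤ f (N - 1), cnt N f i ≤ 2 := fun k hk => by have := hf k hk i hi; omega
  have hg' : ∀ i ≤ g (N - 1), cnt N g i ≤ 2 := fun k hk => by have := hg k hk j hj; omega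
  by_cases hN2 : 2 ≤ N
  · by_cases hs : s 0
    · exact hT (comb_alt N hN2 _ g f hw.swap hg' hf' (not_not.2 hs) mu.transpose hcT hlT h0T)
    · exact comb_alt N hN2 s f g hw hf' hg' hs mu hcard hl h0
  · have : N = 1 := by omega
    subst this
    simp only [hw.f0, hw.g0, Nat.sub_self] at *
    exact single_row s 0 (by simp) mu hl (by omega)

theorem reach_seq {s : ℕ → Prop} {n : ℕ} {μ : YoungDiagram} {c : ℕ × ℕ} (h : Reach s n μ c) :
    ∃ x : ℕ → ℕ, x n = c.1 ∧ (∀ k < n, s k → x k < x (k + 1)) ∧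
      (∀ k < n, ¬ s k → x (k + 1) ≤ x k) ∧
      (∀ m ≤ n, ∀ i, cnt (m + 1) x (i + 1) ≤ cnt (m + 1) x i) ∧
      ∀ i, cnt (n + 1) x i = μ.rowLen i := by
  have anti : ∀ (x : ℕ → ℕ) (m : ℕ) (ν : YoungDiagram), (∀ i, cnt m x i = ν.rowLen i) →
      ∀ i, cnt m x (i + 1) ≤ cnt m x i := by
    intro x m ν h i
    rw [h, h]
    exact ν.rowLen_anti _ _ (by omega)
  induction h with
  | zero μ h =>
    have key : ∀ i, cnt (0 + 1) (fun _ => 0) i = μ.rowLen i := by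
      intro i
      rw [YoungDiagram.rowLen_eq_card, YoungDiagram.row, h, cnt]
      by_cases hi : 0 = i
      · simp [hi, Finset.filter_singleton]
      · simp [hi, Finset.filter_singleton]
    refine ⟨fun _ => 0, rfl, by simp, by simp, ?_, key⟩
    intro m hm i
    obtain rfl : m = 0 := by omega
    exact anti _ _ _ key i
  | succ n μ μ' c c' hr hc hm hD hA ih =>
    obtain ⟨x, hx, h1, h2, h3, h4⟩ := ih
    have hsame : ∀ m ≤ n, ∀ i, cnt (m + 1) (Function.update x (n + 1) c'.1) i = cnt (m + 1) x i := by
      intro m hm i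
      unfold cnt
      congr 1
      apply Finset.filter_congr
      intro k hk
      simp only [Finset.mem_range] at hk
      rw [Function.update_of_ne (by omega)]
    have key : ∀ i, cnt (n + 1 + 1) (Function.update x (n + 1) c'.1) i = μ'.rowLen i := by
      intro i
      have e1 : cnt (n + 1 + 1) (Function.update x (n + 1) c'.1) i
          = cnt (n + 1) x i + if c'.1 = i then 1 else 0 := by
        rw [← hsame n le_rfl]
        unfold cnt
        rw [Finset.range_add_one, Finset.filter_insert, Function.update_self]
        split_ifs with h
        · rw [Finset.card_insert_of_notMem (by simp)]
        · rfl
      rw [e1, h4, YoungDiagram.rowLen_eq_card, YoungDiagram.rowLen_eq_card, YoungDiagram.row,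
        YoungDiagram.row, hm, Finset.filter_insert]
      split_ifs with h
      · rw [Finset.card_insert_of_notMem (by simp [hc])]
      · rfl
    refine ⟨Function.update x (n + 1) c'.1, by simp, ?_, ?_, ?_, key⟩
    · intro k hk hs
      rw [Function.update_of_ne (by omega)]
      by_cases hkn : k = n
      · subst hkn
        rw [Function.update_self, hx]
        exact (hD hs).1
      · rw [Function.update_of_ne (by omega)]
        exact h1 k (by omega) hs
    · intro k hk hs
      rw [Function.update_of_ne (by omega : k ≠ n + 1)]
      by_cases hkn : k = n
      · subst hkn
        rw [Function.update_self, hx]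
        exact (hA hs).1
      · rw [Function.update_of_ne (by omega)]
        exact h2 k (by omega) hs
    · intro m hm i
      by_cases hmn : m = n + 1
      · subst hmn
        exact anti _ _ _ key i
      · rw [hsame m (by omega), hsame m (by omega)]
        exact h3 m (by omega) i

theorem exists_diagram (lam : Multiset ℕ) (h0 : 0 ∉ lam) : ∃ mu : YoungDiagram,
    (∀ i, mu.rowLen i = part lam i) ∧ mu.card = lam.sum ∧ mu.colLen 0 = Multiset.card lam ∧
    ∀ b, (∀ x ∈ lam, x ≤ b) → mu.rowLen 0 ≤ b := by
  have hs : (lam.sort (· ≥ ·)).SortedGE := (Multiset.pairwise_sort lam (· ≥ ·)).sortedGE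
  set w := lam.sort (· ≥ ·) with hw
  have hmem : ∀ x, x ∈ w ↔ x ∈ lam := fun x => by rw [hw, Multiset.mem_sort]
  have hcoe : (w : Multiset ℕ) = lam := by rw [hw, Multiset.sort_eq]
  have hpos : ∀ x ∈ w, 0 < x := by
    intro x hx
    rcases Nat.eq_zero_or_pos x with h | h
    · subst h; exact absurd ((hmem 0).1 hx) h0
    · exact h
  have hr := YoungDiagram.rowLens_ofRowLens_eq_self (hw := hs) hpos
  set mu := YoungDiagram.ofRowLens w hs with hmu
  have hlen : mu.colLen 0 = w.length := by rw [← YoungDiagram.length_rowLens, hr]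
  have hrow : ∀ i, mu.rowLen i = part lam i := by
    intro i
    unfold part
    rw [← hw]
    by_cases hi : i < w.length
    · rw [List.getD_eq_getElem _ _ hi]
      exact YoungDiagram.rowLen_ofRowLens (hw := hs) ⟨i, hi⟩
    · rw [List.getD_eq_default _ _ (by omega)]
      have := rowLen_pos_iff mu i
      omega
  refine ⟨mu, hrow, ?_, ?_, ?_⟩
  · rw [card_yd mu _ (rowLen_colLen mu), ← hcoe, Multiset.sum_coe, ← hr, YoungDiagram.rowLens]
    rfl
  · rw [hlen, ← hcoe, Multiset.coe_card]
  · intro b hb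
    rcases Nat.eq_zero_or_pos (mu.rowLen 0) with h | h
    · omega
    · have h' := (rowLen_pos_iff mu 0).1 h
      apply hb
      rw [← hmem, ← hr]
      unfold YoungDiagram.rowLens
      rw [List.mem_map]
      exact ⟨0, by simpa using h', rfl⟩

namespace SkewShape

theorem convex (R : SkewShape) (a b i j i' j' : ℕ) (h : (i, j) ∈ R.cells) (h' : (i', j') ∈ R.cells)
    (h1 : i ≤ a) (h2 : a ≤ i') (h3 : j ≤ b) (h4 : b ≤ j') : (a, b) ∈ R.cells := by
  simp only [cells, Finset.mem_sdiff, YoungDiagram.mem_cells] at *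
  exact ⟨R.outer.up_left_mem h2 h4 h'.1, fun hh => h.2 (R.inner.up_left_mem h1 h3 hh)⟩

theorem ribbon_diag (R : SkewShape) (hrib : R.Ribbon) (i j i' j' : ℕ) (h : (i, j) ∈ R.cells)
    (h' : (i', j') ∈ R.cells) (h1 : i < i') (h2 : j < j') : False :=
  hrib.2 i j ⟨h, R.convex _ _ _ _ _ _ h h' (by omega) (by omega) (by omega) (by omega),
    R.convex _ _ _ _ _ _ h h' (by omega) (by omega) (by omega) (by omega),
    R.convex _ _ _ _ _ _ h h' (by omega) (by omega) (by omega) (by omega)⟩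

/-- The diagonal of a box. -/
def dg (c : ℕ × ℕ) : ℤ := (c.1 : ℤ) - c.2

theorem dg_inj (R : SkewShape) (hrib : R.Ribbon) : Set.InjOn dg (R.cells : Set (ℕ × ℕ)) := by
  rintro ⟨i, j⟩ h ⟨i', j'⟩ h' he
  simp only [Finset.mem_coe, dg] at h h' he
  rcases lt_trichotomy i i' with hi | hi | hi
  · exact (R.ribbon_diag hrib _ _ _ _ h h' hi (by omega)).elim
  · ext <;> simp <;> omega
  · exact (R.ribbon_diag hrib _ _ _ _ h' h hi (by omega)).elim

theorem dg_interval (R : SkewShape) (hrib : R.Ribbon) (c d : ℕ × ℕ) (hc : c ∈ R.cells)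
    (hd : d ∈ R.cells) (m : ℤ) (h1 : dg c ≤ m) (h2 : m ≤ dg d) : ∃ e ∈ R.cells, dg e = m := by
  by_contra hcon
  push Not at hcon
  have h1' := lt_of_le_of_ne h1 (hcon c hc)
  have h2' := lt_of_le_of_ne h2 (hcon d hd).symm
  apply hrib.1.2
  refine ⟨R.cells.filter fun e => dg e < m, R.cells.filter fun e => m < dg e, ⟨c, by simp [hc, h1']⟩,
    ⟨d, by simp [hd, h2']⟩, ?_, ?_, ?_⟩
  · ext e
    simp only [Finset.mem_union, Finset.mem_filter]
    constructor
    · rintro (h | h) <;> exact h.1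
    · intro h
      rcases lt_or_gt_of_ne (hcon e h) with h' | h'
      · exact Or.inl ⟨h, h'⟩
      · exact Or.inr ⟨h, h'⟩
  · ext e
    simp only [Finset.mem_inter, Finset.mem_filter, Finset.notMem_empty, iff_false]
    rintro ⟨⟨_, h⟩, _, h'⟩
    omega
  · rintro ⟨i, j⟩ hb ⟨i', j'⟩ hc'
    rw [Finset.mem_filter] at hb hc'
    simp only [dg] at hb hc'
    constructor
    · simp only
      rintro rfl
      have := R.convex i ((i : ℤ) - m).toNat _ _ _ _ hc'.1 hb.1 (by omega) (by omega) (by omega)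
        (by omega)
      exact hcon _ this (by simp only [dg]; omega)
    · simp only
      rintro rfl
      have := R.convex ((j : ℤ) + m).toNat j _ _ _ _ hb.1 hc'.1 (by omega) (by omega) (by omega)
        (by omega)
      exact hcon _ this (by simp only [dg]; omega)

theorem ribbon_path (R : SkewShape) (hrib : R.Ribbon) : ∃ p : ℕ → ℕ × ℕ,
    (∀ k < R.size, p k ∈ R.cells) ∧ (∀ c ∈ R.cells, ∃ k < R.size, p k = c) ∧
    ∀ k, k + 1 < R.size → ((p (k + 1)).1 = (p k).1 + 1 ∧ (p (k + 1)).2 = (p k).2) ∨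
      ((p (k + 1)).1 = (p k).1 ∧ (p (k + 1)).2 + 1 = (p k).2) := by
  obtain ⟨c0, hc0, hmin⟩ := Finset.exists_min_image R.cells dg hrib.1.1
  obtain ⟨c1, hc1, hmax⟩ := Finset.exists_max_image R.cells dg hrib.1.1
  have him : R.cells.image dg = Finset.Icc (dg c0) (dg c1) := by
    ext m
    simp only [Finset.mem_image, Finset.mem_Icc]
    constructor
    · rintro ⟨e, he, rfl⟩
      exact ⟨hmin e he, hmax e he⟩
    · rintro ⟨h1, h2⟩
      exact R.dg_interval hrib c0 c1 hc0 hc1 m h1 h2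
  have hN : (R.size : ℤ) = dg c1 - dg c0 + 1 := by
    have h := Finset.card_image_of_injOn (R.dg_inj hrib)
    rw [him, Int.card_Icc] at h
    have := hmin c1 hc1
    unfold size
    omega
  have hex : ∀ k : ℕ, ∃ e, k < R.size → e ∈ R.cells ∧ dg e = dg c0 + k := by
    intro k
    by_cases hk : k < R.size
    · obtain ⟨e, he, he'⟩ := R.dg_interval hrib c0 c1 hc0 hc1 (dg c0 + k) (by omega) (by omega)
      exact ⟨e, fun _ => ⟨he, he'⟩⟩
    · exact ⟨(0, 0), fun h => absurd h hk⟩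
  choose p hp using hex
  refine ⟨p, fun k hk => (hp k hk).1, ?_, ?_⟩
  · intro c hc
    have h1 := hmin c hc
    have h2 := hmax c hc
    have hk : (dg c - dg c0).toNat < R.size := by omega
    refine ⟨_, hk, ?_⟩
    apply R.dg_inj hrib (hp _ hk).1 hc
    rw [(hp _ hk).2]
    omega
  · intro k hk
    obtain ⟨ha, ha'⟩ := hp k (by omega)
    obtain ⟨hb, hb'⟩ := hp (k + 1) hk
    simp only [dg] at *
    by_contra hcon
    rcases lt_or_ge (p k).1 (p (k + 1)).1 with hi | hi
    · exact R.ribbon_diag hrib _ _ _ _ ha hb hi (by omega)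
    · exact R.ribbon_diag hrib _ _ _ _ hb ha (by omega) (by omega)

end SkewShape

/-- A lattice path going down or left. -/
structure RPath (N : ℕ) (p : ℕ → ℕ × ℕ) : Prop where
  step : ∀ k, k + 1 < N → ((p (k + 1)).1 = (p k).1 + 1 ∧ (p (k + 1)).2 = (p k).2) ∨
      ((p (k + 1)).1 = (p k).1 ∧ (p (k + 1)).2 + 1 = (p k).2)

theorem RPath.mono {N : ℕ} {p : ℕ → ℕ × ℕ} (h : RPath N p) (k d : ℕ) (hd : k + d < N) :
    (p k).1 ≤ (p (k + d)).1 ∧ (p (k + d)).2 ≤ (p k).2 ∧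
      (p (k + d)).1 + (p k).2 = (p (k + d)).2 + (p k).1 + d := by
  induction d with
  | zero => simp; omega
  | succ d ih =>
    have h1 := ih (by omega)
    have h2 := h.step (k + d) (by omega)
    rw [← add_assoc]
    omega

theorem RPath.mono2 {N : ℕ} {p : ℕ → ℕ × ℕ} (h : RPath N p) (k l : ℕ) (hkl : k ≤ l) (hd : l < N) :
    (p k).1 ≤ (p l).1 ∧ (p l).2 ≤ (p k).2 ∧
      (p l).1 + (p k).2 + k = (p l).2 + (p k).1 + l := by
  have := h.mono k (l - k) (by omega)
  rw [show k + (l - k) = l by omega] at this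
  omega

theorem RPath.walk {N : ℕ} {p : ℕ → ℕ × ℕ} (h : RPath N p) :
    Walk2 N (fun k => (p (k + 1)).1 = (p k).1 + 1) (fun k => (p k).1 - (p 0).1)
      (fun k => (p 0).2 - (p k).2) := by
  refine ⟨by simp, by simp, ?_, ?_⟩
  · intro k hk hs
    have h1 := h.step k hk
    have h2 := h.mono2 0 k (by omega) (by omega)
    omega
  · intro k hk hs
    have h1 := h.step k hk
    have h2 := h.mono2 0 k (by omega) (by omega)
    have h3 := h.mono2 0 (k + 1) (by omega) (by omega)
    omega

theorem walk_surj {N : ℕ} {s : ℕ → Prop} {f g : ℕ → ℕ} (h : Walk2 N s f g) (k : ℕ) (hk : k < N) :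
    ∀ i ≤ f k, ∃ l ≤ k, f l = i := by
  induction k with
  | zero => intro i hi; exact ⟨0, le_rfl, by have := h.f0; omega⟩
  | succ k ih =>
    intro i hi
    by_cases hik : i ≤ f k
    · obtain ⟨l, hl, hl'⟩ := ih (by omega) i hik
      exact ⟨l, by omega, hl'⟩
    · have := h.step k hk
      exact ⟨k + 1, le_rfl, by omega⟩

theorem path_card {N : ℕ} {p : ℕ → ℕ × ℕ} (h : RPath N p) (S : Finset (ℕ × ℕ))
    (h1 : ∀ k < N, p k ∈ S) (h2 : ∀ c ∈ S, ∃ k < N, p k = c) (P : ℕ × ℕ → Prop) [DecidablePred P] :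
    (S.filter P).card = ((Finset.range N).filter fun k => P (p k)).card := by
  symm
  apply Finset.card_bij (fun k _ => p k)
  · intro k hk
    simp only [Finset.mem_filter, Finset.mem_range] at hk ⊢
    exact ⟨h1 k hk.1, hk.2⟩
  · intro a ha b hb hab
    simp only [Finset.mem_filter, Finset.mem_range] at ha hb
    rcases le_total a b with hl | hl
    · have := h.mono2 a b hl hb.1
      rw [hab] at this; omega
    · have := h.mono2 b a hl ha.1
      rw [hab] at this; omega
  · intro c hc
    simp only [Finset.mem_filter] at hc
    obtain ⟨k, hk, rfl⟩ := h2 c hc.1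
    exact ⟨k, by simp [hk, hc.2], rfl⟩

theorem main_thm (N : ℕ) (R : SkewShape)
    (hrib : R.Ribbon) (heq : R.Equitable) (hsize : R.size = N)
    (lam : Multiset ℕ) (hsum : lam.sum = N) (h0 : 0 ∉ lam)
    (hcard : Multiset.card lam ≤ R.numRows) (hparts : ∀ x ∈ lam, x ≤ R.numCols) :
    lam ∈ R.supp := by
  have hN : 1 ≤ N := by
    rw [← hsize]; exact Finset.card_pos.2 hrib.1.1
  obtain ⟨p, hp1, hp2, hp3⟩ := R.ribbon_path hrib
  rw [hsize] at hp1 hp2 hp3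
  have hP : RPath N p := ⟨hp3⟩
  have hw := hP.walk
  have hcnt := path_card hP R.cells hp1 hp2
  obtain ⟨mu, hm1, hm2, hm3, hm4⟩ := exists_diagram lam h0
  have hrl : ∀ i, R.rowLen ((p 0).1 + i) = cnt N (fun k => (p k).1 - (p 0).1) i := by
    intro i
    unfold SkewShape.rowLen cnt
    rw [hcnt]
    congr 1
    apply Finset.filter_congr
    intro k hk
    have := hP.mono2 0 k (by omega) (by simpa using hk)
    beta_reduce
    omega
  have hcl : ∀ i ≤ (p 0).2 - (p (N - 1)).2,
      R.colLen ((p 0).2 - i) = cnt N (fun k => (p 0).2 - (p k).2) i := by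
    intro i hi
    unfold SkewShape.colLen cnt
    rw [hcnt]
    congr 1
    apply Finset.filter_congr
    intro k hk
    have := hP.mono2 0 k (by omega) (by simpa using hk)
    beta_reduce
    omega
  have hrm : ∀ i ≤ (p (N - 1)).1 - (p 0).1, (p 0).1 + i ∈ R.rowSet := by
    intro i hi
    obtain ⟨l, hl, hl'⟩ := walk_surj hw (N - 1) (by omega) i hi
    have := hP.mono2 0 l (by omega) (by omega)
    unfold SkewShape.rowSet
    rw [Finset.mem_image]
    exact ⟨p l, hp1 l (by omega), by omega⟩
  have hcm : ∀ i ≤ (p 0).2 - (p (N - 1)).2, (p 0).2 - i ∈ R.colSet := by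
    intro i hi
    obtain ⟨l, hl, hl'⟩ := walk_surj hw.swap (N - 1) (by omega) i hi
    have := hP.mono2 0 l (by omega) (by omega)
    unfold SkewShape.colSet
    rw [Finset.mem_image]
    exact ⟨p l, hp1 l (by omega), by omega⟩
  have hnr : R.numRows ≤ (p (N - 1)).1 - (p 0).1 + 1 := by
    have : R.rowSet ⊆ Finset.Icc (p 0).1 (p (N - 1)).1 := by
      intro i hi
      unfold SkewShape.rowSet at hi
      rw [Finset.mem_image] at hi
      obtain ⟨c, hc, rfl⟩ := hi
      obtain ⟨k, hk, rfl⟩ := hp2 c hc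
      have h1 := hP.mono2 0 k (by omega) (by omega)
      have h2 := hP.mono2 k (N - 1) (by omega) (by omega)
      rw [Finset.mem_Icc]; omega
    have := Finset.card_le_card this
    rw [Nat.card_Icc] at this
    have h1 := hP.mono2 0 (N - 1) (by omega) (by omega)
    unfold SkewShape.numRows
    omega
  have hnc : R.numCols ≤ (p 0).2 - (p (N - 1)).2 + 1 := by
    have : R.colSet ⊆ Finset.Icc (p (N - 1)).2 (p 0).2 := by
      intro i hi
      unfold SkewShape.colSet at hi
      rw [Finset.mem_image] at hi
      obtain ⟨c, hc, rfl⟩ := hi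
      obtain ⟨k, hk, rfl⟩ := hp2 c hc
      have h1 := hP.mono2 0 k (by omega) (by omega)
      have h2 := hP.mono2 k (N - 1) (by omega) (by omega)
      rw [Finset.mem_Icc]; omega
    have := Finset.card_le_card this
    rw [Nat.card_Icc] at this
    have h1 := hP.mono2 0 (N - 1) (by omega) (by omega)
    unfold SkewShape.numCols
    omega
  obtain ⟨c, hc⟩ := comb N hN _ _ _ hw
    (fun i hi j hj => by
      rw [← hrl, ← hrl]; exact heq.1 _ (hrm i hi) _ (hrm j hj))
    (fun i hi j hj => by
      rw [← hcl i hi, ← hcl j hj]; exact heq.2 _ (hcm i hi) _ (hcm j hj))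
    mu (by rw [hm2, hsum]) (by rw [hm3]; exact hcard.trans hnr) ((hm4 _ hparts).trans hnc)
  obtain ⟨x, -, hx1, hx2, hx3, hx4⟩ := reach_seq hc
  rw [show N - 1 + 1 = N by omega] at hx4
  let T : ℕ × ℕ → ℕ := fun c => x ((c.1 + (p 0).2) - (c.2 + (p 0).1)) + 1
  have hT : ∀ k < N, T (p k) = x k + 1 := by
    intro k hk
    have := hP.mono2 0 k (by omega) hk
    simp only [T]
    rw [show (p k).1 + (p 0).2 - ((p k).2 + (p 0).1) = k by omega]
  have hrow : ∀ k d, k + d < N → (p (k + d)).1 = (p k).1 → x (k + d) ≤ x k := by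
    intro k d
    induction d with
    | zero => intro _ _; exact le_rfl
    | succ d ih =>
      intro hk he
      rw [← add_assoc k d 1] at he ⊢
      have h1 := hP.mono k d (by omega)
      have h2 := hP.step (k + d) (by omega)
      have h3 := hx2 (k + d) (by omega) (by omega)
      have h4 := ih (by omega) (by omega)
      omega
  have hcol : ∀ k d, k + d < N → (p (k + d)).2 = (p k).2 → x k + d ≤ x (k + d) := by
    intro k d
    induction d with
    | zero => intro _ _; exact le_rfl
    | succ d ih =>
      intro hk he
      rw [← add_assoc k d 1] at he ⊢
      have h1 := hP.mono k d (by omega)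
      have h2 := hP.step (k + d) (by omega)
      have h3 := hx1 (k + d) (by omega) (by omega)
      have h4 := ih (by omega) (by omega)
      omega
  have hreads : ∀ a b, a < N → b < N → (ReadsBefore (p a) (p b) ↔ a ≤ b) := by
    intro a b ha hb
    unfold ReadsBefore
    rcases le_total a b with hl | hl
    · have := hP.mono2 a b hl hb
      omega
    · have := hP.mono2 b a hl ha
      omega
  refine ⟨h0, T, ⟨⟨?_, ?_, ?_⟩, ?_⟩, ?_⟩
  · intro c _
    simp [T]
  · intro i j j' h h' hle
    obtain ⟨k, hk, hk'⟩ := hp2 _ h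
    obtain ⟨l, hl, hl'⟩ := hp2 _ h'
    rw [← hk', ← hl', hT k hk, hT l hl]
    rcases le_total l k with hkl | hkl
    · have := hrow l (k - l) (by omega) (by rw [show l + (k - l) = k by omega, hk', hl'])
      rw [show l + (k - l) = k by omega] at this
      omega
    · have := hP.mono2 k l hkl hl
      rw [hk', hl'] at this
      simp only at this
      rw [show k = l by omega]
  · intro i i' j h h' hle
    obtain ⟨k, hk, hk'⟩ := hp2 _ h
    obtain ⟨l, hl, hl'⟩ := hp2 _ h'
    rw [← hk', ← hl', hT k hk, hT l hl]
    rcases le_total k l with hkl | hkl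
    · have := hcol k (l - k) (by omega) (by rw [show k + (l - k) = l by omega, hk', hl'])
      rw [show k + (l - k) = l by omega] at this
      have h3 := hP.mono2 k l hkl hl
      rw [hk', hl'] at h3
      simp only at h3
      omega
    · have := hP.mono2 l k hkl hk
      rw [hk', hl'] at this
      simp only at this
      omega
  · intro d hd i
    obtain ⟨m, hm, rfl⟩ := hp2 d hd
    have key : ∀ i, (R.cells.filter fun c => T c = i + 1 ∧ ReadsBefore c (p m)).card
        = cnt (m + 1) x i := by
      intro i
      rw [hcnt]
      unfold cnt
      congr 1
      ext k
      simp only [Finset.mem_filter, Finset.mem_range]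
      constructor
      · rintro ⟨h1, h2, h3⟩
        rw [hT k h1] at h2
        rw [hreads k m h1 hm] at h3
        omega
      · rintro ⟨h1, h2⟩
        refine ⟨by omega, ?_, ?_⟩
        · rw [hT k (by omega)]; omega
        · rw [hreads k m (by omega) hm]; omega
    have := hx3 m (by omega) i
    rw [← key, ← key] at this
    exact this
  · intro i
    rw [← hm1, ← hx4]
    unfold SkewShape.content cnt
    rw [hcnt]
    congr 1
    apply Finset.filter_congr
    intro k hk
    rw [hT k (by simpa using hk)]
    omega

/-- Let `R` be an equitable ribbon with `N` boxes.  If `lam` is a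
partition of `N` with at most as many nonzero parts as `R` has nonempty rows, and
with largest part at most the number of nonempty columns of `R`, then
`lam ∈ supp R`. -/
theorem mem_support_of_equitable_ribbon (N : ℕ) (R : SkewShape)
    (hrib : R.Ribbon) (heq : R.Equitable) (hsize : R.size = N)
    (lam : Multiset ℕ) (hsum : lam.sum = N) (h0 : 0 ∉ lam)
    (hcard : Multiset.card lam ≤ R.numRows) (hparts : ∀ x ∈ lam, x ≤ R.numCols) :
    lam ∈ R.supp := by
  exact main_thm N R hrib heq hsize lam hsum h0 hcard hparts
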